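/- The identity (8/π²) · ∫₀^{π/2} ∫₀^{π/2} ∫₀^{π/2} sin φ · sin⁴ψ dψ dφ dθ + (24/π²) · ∫₀^{π/2} ∫₀^{π/2} ∫₀^{π/2} √(1 − cos²φ · sin²ψ) · sin ψ · sin φ · sin²ψ dψ dφ dθ = 3·(1/4 + π/8 + 1/π) holds. (This is the second moment E(mw²) of the mean width of the projection of a unit 4-cube onto a uniformly random 3-subspace of ℝ⁴.) -/

import Mathlib

open Real

lemma aux_inner (ψ : ℝ) (h0 : 0 ≤ ψ) (h1 : ψ ≤ π/2) :
    ∫ φ in (0:ℝ)..(π/2), Real.sqrt (1 - Real.cos φ ^ 2 * Real.sin ψ ^ 2) * Real.sin ψ *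
          Real.sin φ * Real.sin ψ ^ 2 = (1/2) * sin ψ ^ 2 * (ψ + sin ψ * cos ψ) := by
  have hs0 : 0 ≤ sin ψ := sin_nonneg_of_nonneg_of_le_pi h0 (by linarith [pi_pos])
  have hs1 : sin ψ ≤ 1 := sin_le_one ψ
  have hc : 0 ≤ cos ψ := cos_nonneg_of_neg_pi_div_two_le_of_le (by linarith [pi_pos]) h1
  have key := intervalIntegral.integral_eq_sub_of_hasDerivAt_of_le (a := 0) (b := π/2)
    (f := fun φ => -(1/2) * sin ψ ^ 2 * (arcsin (sin ψ * cos φ)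
      + sin ψ * cos φ * √(1 - (sin ψ * cos φ)^2)))
    (f' := fun φ => Real.sqrt (1 - Real.cos φ ^ 2 * Real.sin ψ ^ 2) * Real.sin ψ *
          Real.sin φ * Real.sin ψ ^ 2) (by positivity) ?_ ?_ ?_
  · rw [key]
    have e : √(1 - sin ψ ^ 2) = cos ψ := by
      rw [← cos_sq', sqrt_sq hc]
    simp only [cos_pi_div_two, cos_zero, mul_zero, mul_one, arcsin_zero, e]
    rw [arcsin_sin (by linarith [pi_pos]) h1]
    ring
  · apply Continuous.continuousOn
    have := continuous_arcsin
    fun_prop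
  · intro φ hφ
    have hφ0 : 0 < cos φ := cos_pos_of_mem_Ioo ⟨by linarith [hφ.1, pi_pos], hφ.2⟩
    have hφs : 0 < sin φ := sin_pos_of_pos_of_lt_pi hφ.1 (by linarith [hφ.2, pi_pos])
    have hφ1 : cos φ < 1 := by nlinarith [sin_sq_add_cos_sq φ]
    have hv0 : 0 ≤ sin ψ * cos φ := by positivity
    have hv1 : sin ψ * cos φ < 1 := by nlinarith
    have hp : 0 < 1 - (sin ψ * cos φ)^2 := by nlinarith
    have hv : HasDerivAt (fun φ => sin ψ * cos φ) (sin ψ * (- sin φ)) φ :=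
      (hasDerivAt_cos φ).const_mul _
    have ha := (hasDerivAt_arcsin (x := sin ψ * cos φ) (by linarith) hv1.ne).comp φ hv
    have hq := (((hv.pow 2).const_sub 1).sqrt hp.ne')
    have := (ha.add (hv.mul hq)).const_mul (-(1/2) * sin ψ ^ 2)
    refine this.congr_deriv ?_
    have e : 1 - Real.cos φ ^ 2 * Real.sin ψ ^ 2 = 1 - (sin ψ * cos φ)^2 := by ring
    rw [e]
    simp only [Pi.pow_apply]
    have hr := sqrt_pos.2 hp
    have hr2 := sq_sqrt hp.le
    set r := √(1 - (sin ψ * cos φ)^2)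
    field_simp
    rw [hr2]
    ring
  · apply Continuous.intervalIntegrable
    fun_prop

lemma aux_outer :
    ∫ ψ in (0:ℝ)..(π/2), (1/2) * sin ψ ^ 2 * (ψ + sin ψ * cos ψ) = π^2/32 + 1/4 := by
  rw [intervalIntegral.integral_eq_sub_of_hasDerivAt
    (f := fun ψ => 1/2 * (ψ^2/4 - ψ * (sin ψ * cos ψ)/2 + sin ψ^2/4 + sin ψ^4/4))]
  · simp
    ring
  · intro x _
    have hs := hasDerivAt_sin x
    have hc := hasDerivAt_cos x
    have hi := hasDerivAt_id x
    have := ((((((hi.pow 2).div_const 4).sub ((hi.mul (hs.mul hc)).div_const 2)).add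
      ((hs.pow 2).div_const 4)).add ((hs.pow 4).div_const 4))).const_mul (1/2)
    refine this.congr_deriv ?_
    simp
    have h := cos_sq' x
    linear_combination (-x/4) * h
  · apply Continuous.intervalIntegrable
    fun_prop

lemma aux_sin4 : ∫ ψ in (0:ℝ)..(π/2), sin ψ ^ 4 = 3 * π / 16 := by
  have h := integral_sin_pow (a := 0) (b := π/2) 2
  have h2 := integral_sin_pow (a := 0) (b := π/2) 0
  norm_num at h h2
  rw [h]
  ring



/-- The second moment `E(mw²)` of the mean width of the projection of a unit 4-cube
onto a uniformly random 3-subspace of `ℝ⁴` equals `3(1/4 + π/8 + 1/π)`. -/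
theorem second_moment_mean_width_projection_4cube :
    (8 / π ^ 2) *
      (∫ _θ in (0:ℝ)..(π/2), ∫ φ in (0:ℝ)..(π/2), ∫ ψ in (0:ℝ)..(π/2),
        Real.sin φ * Real.sin ψ ^ 4)
    + (24 / π ^ 2) *
      (∫ _θ in (0:ℝ)..(π/2), ∫ φ in (0:ℝ)..(π/2), ∫ ψ in (0:ℝ)..(π/2),
        Real.sqrt (1 - Real.cos φ ^ 2 * Real.sin ψ ^ 2) * Real.sin ψ *
          Real.sin φ * Real.sin ψ ^ 2)
    = 3 * (1/4 + π/8 + 1/π) := by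
  have h1 : (∫ φ in (0:ℝ)..(π/2), ∫ ψ in (0:ℝ)..(π/2), Real.sin φ * Real.sin ψ ^ 4)
      = 3 * π / 16 := by
    simp only [intervalIntegral.integral_const_mul, aux_sin4,
      intervalIntegral.integral_mul_const, integral_sin]
    simp
  have h2 : (∫ φ in (0:ℝ)..(π/2), ∫ ψ in (0:ℝ)..(π/2),
        Real.sqrt (1 - Real.cos φ ^ 2 * Real.sin ψ ^ 2) * Real.sin ψ *
          Real.sin φ * Real.sin ψ ^ 2) = π^2/32 + 1/4 := by
    rw [MeasureTheory.intervalIntegral_intervalIntegral_swap, ← aux_outer]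
    · apply intervalIntegral.integral_congr
      intro ψ hψ
      rw [Set.uIcc_of_le (by positivity)] at hψ
      exact aux_inner ψ hψ.1 hψ.2
    · refine MeasureTheory.IntegrableOn.mono_set (t := Set.uIcc 0 (π/2) ×ˢ Set.uIcc 0 (π/2)) ?_
        (Set.prod_mono Set.uIoc_subset_uIcc Set.uIoc_subset_uIcc)
      refine ContinuousOn.integrableOn_compact (isCompact_uIcc.prod isCompact_uIcc) ?_
      apply Continuous.continuousOn
      simp only [Function.uncurry_def]
      fun_prop
  rw [h1, h2]
  simp only [intervalIntegral.integral_const, smul_eq_mul]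
  have := pi_pos
  field_simp
  ring
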